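/- For all integers d, k with d > k > 1, the growth constant of closed (d,k)-self-avoiding manifolds is strictly smaller than that of all (d,k)-self-avoiding manifolds: limsup_{n→∞} (c^SAM_{(d,k),n}(0))^{1/n} ≤ 2(d−k)+1 < k(d−k+1) ≤ liminf_{n→∞} (c^SAM_{(d,k),n})^{1/n}. -/

import Mathlib

open Filter

/-- A `k`-face of the hypercubic lattice `ℤ^d`: an orientation set `S ⊆ {1,…,d}`
together with a base vertex `v ∈ ℤ^d`. -/
abbrev Face (d : ℕ) := Finset (Fin d) × (Fin d → ℤ)

/-- The boundary `(k-1)`-edges of a `k`-face `(S, v)`: the `(k-1)`-faces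
`(S \ {i}, v)` and `(S \ {i}, v + e_i)` for `i ∈ S`. -/
def faceEdges {d : ℕ} (f : Face d) : Finset (Face d) :=
  f.1.biUnion fun i =>
    {(f.1.erase i, f.2), (f.1.erase i, f.2 + Pi.single i 1)}

/-- Two faces are adjacent if they are distinct and share a common boundary edge. -/
def FaceAdj {d : ℕ} (f g : Face d) : Prop :=
  f ≠ g ∧ ∃ e, e ∈ faceEdges f ∧ e ∈ faceEdges g

/-- A set of faces is connected with respect to adjacency. -/
def ConnectedFaces {d : ℕ} (M : Finset (Face d)) : Prop :=
  ∀ f ∈ M, ∀ g ∈ M, Relation.ReflTransGen (fun a b => a ∈ M ∧ b ∈ M ∧ FaceAdj a b) f g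

/-- A `(d,k)`-self-avoiding manifold of `k`-area `n`: a connected set of `n` `k`-faces
such that every `(k-1)`-edge bounds at most two of its `k`-faces. -/
def IsSAM (d k n : ℕ) (M : Finset (Face d)) : Prop :=
  M.card = n ∧ (∀ f ∈ M, f.1.card = k) ∧ ConnectedFaces M ∧
    ∀ e : Face d, (M.filter fun f => e ∈ faceEdges f).card ≤ 2

/-- A closed `(d,k)`-self-avoiding manifold: every boundary edge of every face
is shared by exactly two faces. -/
def IsClosedSAM (d k n : ℕ) (M : Finset (Face d)) : Prop :=
  IsSAM d k n M ∧ ∀ f ∈ M, ∀ e ∈ faceEdges f,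
    (M.filter fun g => e ∈ faceEdges g).card = 2

/-- A `(d,k)`-fixed polyominoid of `k`-area `n`: a connected set of `n` `k`-faces. -/
def IsXD (d k n : ℕ) (M : Finset (Face d)) : Prop :=
  M.card = n ∧ (∀ f ∈ M, f.1.card = k) ∧ ConnectedFaces M

/-- Translation of a face by a lattice vector. -/
def translateFace {d : ℕ} (t : Fin d → ℤ) (f : Face d) : Face d := (f.1, f.2 + t)

/-- Two sets of faces are translation-equivalent. -/
def TransEquiv {d : ℕ} (A B : Finset (Face d)) : Prop :=
  ∃ t : Fin d → ℤ, A.image (translateFace t) = B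

/-- The number of `(d,k)`-self-avoiding manifolds of `k`-area `n`, up to translation. -/
noncomputable def samCount (d k n : ℕ) : ℕ :=
  Nat.card (Quot fun A B : {M : Finset (Face d) // IsSAM d k n M} =>
    TransEquiv A.val B.val)

/-- The number of closed `(d,k)`-self-avoiding manifolds of `k`-area `n`, up to
translation. -/
noncomputable def closedSamCount (d k n : ℕ) : ℕ :=
  Nat.card (Quot fun A B : {M : Finset (Face d) // IsClosedSAM d k n M} =>
    TransEquiv A.val B.val)

/-- The number of `(d,k)`-fixed polyominoids of `k`-area `n`, up to translation. -/
noncomputable def xdCount (d k n : ℕ) : ℕ :=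
  Nat.card (Quot fun A B : {M : Finset (Face d) // IsXD d k n M} =>
    TransEquiv A.val B.val)

lemma mem_faceEdges' {d : ℕ} (f e : Face d) : e ∈ faceEdges f ↔
    ∃ i ∈ f.1, e.1 = f.1.erase i ∧ (e.2 = f.2 ∨ e.2 = f.2 + Pi.single i 1) := by
  obtain ⟨e1, e2⟩ := e
  simp only [faceEdges, Finset.mem_biUnion, Finset.mem_insert, Finset.mem_singleton, Prod.mk.injEq]
  constructor
  · rintro ⟨i, hi, h | h⟩
    · exact ⟨i, hi, h.1, Or.inl h.2⟩
    · exact ⟨i, hi, h.1, Or.inr h.2⟩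
  · rintro ⟨i, hi, h, h' | h'⟩
    · exact ⟨i, hi, Or.inl ⟨h, h'⟩⟩
    · exact ⟨i, hi, Or.inr ⟨h, h'⟩⟩

lemma card_faceEdges_le {d : ℕ} (f : Face d) : (faceEdges f).card ≤ f.1.card * 2 := by
  unfold faceEdges
  exact Finset.card_biUnion_le_card_mul _ _ _ (fun i _ => Finset.card_le_two)

/-- The faces which contain a given edge. -/
def cofaces {d : ℕ} (e : Face d) : Finset (Face d) :=
  (e.1ᶜ).biUnion fun j => {(insert j e.1, e.2), (insert j e.1, e.2 - Pi.single j 1)}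

lemma mem_cofaces {d : ℕ} {f e : Face d} (h : e ∈ faceEdges f) : f ∈ cofaces e := by
  obtain ⟨i, hi, h1, h2⟩ := (mem_faceEdges' f e).1 h
  obtain ⟨f1, f2⟩ := f
  obtain ⟨e1, e2⟩ := e
  simp only at *
  subst h1
  simp only [cofaces, Finset.mem_biUnion, Finset.mem_insert, Finset.mem_singleton, Prod.mk.injEq,
    Finset.mem_compl]
  refine ⟨i, by simp, ?_⟩
  rw [Finset.insert_erase hi]
  rcases h2 with h2 | h2
  · left; simp [h2]
  · right; simp [h2]

lemma card_cofaces_le {d k : ℕ} (hkd : k < d) {f e : Face d} (hf : f.1.card = k)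
    (h : e ∈ faceEdges f) : (cofaces e).card ≤ 2 * (d - k) + 1 + 1 := by
  obtain ⟨i, hi, h1, h2⟩ := (mem_faceEdges' f e).1 h
  have hc : e.1.card = k - 1 := by rw [h1, Finset.card_erase_of_mem hi, hf]
  have hpos : 0 < k := by rw [← hf]; exact Finset.card_pos.2 ⟨i, hi⟩
  have : (cofaces e).card ≤ (e.1ᶜ).card * 2 :=
    Finset.card_biUnion_le_card_mul _ _ _ (fun i _ => Finset.card_le_two)
  rw [Finset.card_compl, hc, Fintype.card_fin] at this
  omega

lemma card_options_le {d k : ℕ} (hkd : k < d) {f e : Face d} (hf : f.1.card = k)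
    (h : e ∈ faceEdges f) (A : Finset (Face d)) (hA : f ∈ A) :
    ((cofaces e).filter (· ∉ A)).card ≤ 2 * (d - k) + 1 := by
  have h1 := card_cofaces_le hkd hf h
  have h2 : (cofaces e).filter (· ∉ A) ⊆ (cofaces e).erase f := by
    intro g hg
    simp only [Finset.mem_filter] at hg
    refine Finset.mem_erase.2 ⟨?_, hg.1⟩
    rintro rfl
    exact hg.2 hA
  have h3 := Finset.card_le_card h2
  rw [Finset.card_erase_of_mem (mem_cofaces h)] at h3
  omega

lemma closure_eq {d : ℕ} {A M : Finset (Face d)} (hAM : A ⊆ M) (hne : A.Nonempty)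
    (hc : ConnectedFaces M) (h : ∀ f ∈ A, ∀ g ∈ M, FaceAdj f g → g ∈ A) : M = A := by
  obtain ⟨a, ha⟩ := hne
  refine Finset.Subset.antisymm ?_ hAM
  intro g hg
  have := hc a (hAM ha) g hg
  induction this with
  | refl => exact ha
  | tail h1 h2 ih => exact h _ (ih h2.1) _ h2.2.1 h2.2.2

lemma third_eq {d : ℕ} {M : Finset (Face d)} {e f g g' : Face d}
    (h2 : (M.filter fun f => e ∈ faceEdges f).card ≤ 2)
    (hf : f ∈ M) (hg : g ∈ M) (hg' : g' ∈ M) (ef : e ∈ faceEdges f) (eg : e ∈ faceEdges g)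
    (eg' : e ∈ faceEdges g') (hfg : f ≠ g) (hfg' : g' ≠ f) : g = g' := by
  by_contra hne
  have : ({f, g, g'} : Finset (Face d)).card ≤ 2 := by
    refine le_trans (Finset.card_le_card ?_) h2
    intro x hx
    simp only [Finset.mem_insert, Finset.mem_singleton] at hx
    simp only [Finset.mem_filter]
    rcases hx with rfl | rfl | rfl <;> simp_all
  rw [Finset.card_eq_three.2 ⟨f, g, g', hfg, hfg'.symm, hne, rfl⟩] at this
  omega

lemma closed_bound {d k n : ℕ} (hkd : k < d) : ∀ s : ℕ, ∀ A : Finset (Face d), A.Nonempty →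
    A.card + s = n → ∃ F : Finset (Finset (Face d)), F.card ≤ (2 * (d - k) + 1) ^ s ∧
      ∀ M, IsClosedSAM d k n M → A ⊆ M → M ∈ F := by
  intro s
  induction s with
  | zero =>
    intro A hne hA
    refine ⟨{A}, by simp, ?_⟩
    intro M hM hAM
    have := hM.1.1
    rw [Finset.mem_singleton]
    exact (Finset.eq_of_subset_of_card_le hAM (by omega)).symm
  | succ s ih =>
    intro A hne hA
    by_cases h : ∃ f ∈ A, f.1.card = k ∧ ∃ e ∈ faceEdges f, ∀ g ∈ A, e ∈ faceEdges g → g = f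
    · obtain ⟨f, hf, hfk, e, he, hu⟩ := h
      have key : ∀ g : Face d, ∃ F : Finset (Finset (Face d)), g ∉ A →
          (F.card ≤ (2 * (d - k) + 1) ^ s ∧
            ∀ M, IsClosedSAM d k n M → insert g A ⊆ M → M ∈ F) := by
        intro g
        by_cases hg : g ∈ A
        · exact ⟨∅, fun h => absurd hg h⟩
        · obtain ⟨F, hF⟩ := ih (insert g A) (Finset.insert_nonempty _ _)
            (by rw [Finset.card_insert_of_notMem hg]; omega)
          exact ⟨F, fun _ => hF⟩
      choose F hF using key
      refine ⟨((cofaces e).filter (· ∉ A)).biUnion F, ?_, ?_⟩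
      · refine (Finset.card_biUnion_le_card_mul _ _ ((2 * (d - k) + 1) ^ s) ?_).trans ?_
        · intro g hg
          exact (hF g (Finset.mem_filter.1 hg).2).1
        · rw [pow_succ']
          exact Nat.mul_le_mul_right _ (card_options_le hkd hfk he A hf)
      · intro M hM hAM
        have h2 := hM.2 f (hAM hf) e he
        obtain ⟨g, hg, hgf⟩ := Finset.exists_mem_ne (by omega : 1 < (M.filter fun g => e ∈ faceEdges g).card) f
        rw [Finset.mem_filter] at hg
        have hgA : g ∉ A := fun hgA => hgf (hu g hgA hg.2)
        rw [Finset.mem_biUnion]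
        refine ⟨g, Finset.mem_filter.2 ⟨mem_cofaces hg.2, hgA⟩, (hF g hgA).2 M hM ?_⟩
        exact Finset.insert_subset hg.1 hAM
    · refine ⟨∅, by simp, ?_⟩
      intro M hM hAM
      exfalso
      push Not at h
      have : M = A := by
        refine closure_eq hAM hne hM.1.2.2.1 ?_
        rintro f hf g hg ⟨hfg, e, ef, eg⟩
        obtain ⟨g', hg', eg', hne'⟩ := h f hf (hM.1.2.1 f (hAM hf)) e ef
        rw [third_eq (hM.1.2.2.2 e) (hAM hf) hg (hAM hg') ef eg eg' hfg hne']
        exact hg'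
      have h1 := hM.1.1
      rw [this] at h1
      omega

lemma sam_bound {d k n : ℕ} (hkd : k < d) : ∀ s : ℕ, ∀ A E : Finset (Face d), A.Nonempty →
    E ⊆ A.biUnion faceEdges →
    n + n * (k * 2) ≤ A.card + E.card + s →
    ∃ F : Finset (Finset (Face d)), F.card ≤ (2 * (d - k) + 1 + 1) ^ s ∧
      ∀ M, IsSAM d k n M → A ⊆ M →
        (∀ e ∈ E, ∀ f ∈ M, ∀ g ∈ M, e ∈ faceEdges f → e ∈ faceEdges g → f = g) → M ∈ F := by
  intro s
  induction s with
  | zero =>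
    intro A E hne hE hA
    refine ⟨{A}, by simp, ?_⟩
    intro M hM hAM _
    have h1 := hM.1
    have h2 := Finset.card_le_card hAM
    have h3 : E.card ≤ n * (k * 2) := by
      refine (Finset.card_le_card (hE.trans (Finset.biUnion_subset_biUnion_of_subset_left _ hAM))).trans ?_
      rw [← h1]
      refine Finset.card_biUnion_le_card_mul _ _ _ ?_
      intro f hf
      rw [← hM.2.1 f hf]
      exact card_faceEdges_le f
    rw [Finset.mem_singleton]
    exact (Finset.eq_of_subset_of_card_le hAM (by omega)).symm
  | succ s ih =>
    intro A E hne hE hA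
    by_cases h : ∃ f ∈ A, f.1.card = k ∧ ∃ e ∈ faceEdges f, e ∉ E ∧
        ∀ g ∈ A, e ∈ faceEdges g → g = f
    · obtain ⟨f, hf, hfk, e, he, heE, hu⟩ := h
      have key : ∀ g : Face d, ∃ F : Finset (Finset (Face d)), g ∉ A →
          (F.card ≤ (2 * (d - k) + 1 + 1) ^ s ∧
            ∀ M, IsSAM d k n M → insert g A ⊆ M → 
              (∀ e ∈ E, ∀ f ∈ M, ∀ g ∈ M, e ∈ faceEdges f → e ∈ faceEdges g → f = g) → M ∈ F) := by
        intro g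
        by_cases hg : g ∈ A
        · exact ⟨∅, fun h => absurd hg h⟩
        · obtain ⟨F, hF⟩ := ih (insert g A) E (Finset.insert_nonempty _ _)
            (hE.trans (Finset.biUnion_subset_biUnion_of_subset_left _ (Finset.subset_insert _ _)))
            (by rw [Finset.card_insert_of_notMem hg]; omega)
          exact ⟨F, fun _ => hF⟩
      choose F hF using key
      obtain ⟨F', hF'1, hF'2⟩ := ih A (insert e E) hne
        (Finset.insert_subset (Finset.mem_biUnion.2 ⟨f, hf, he⟩) hE)
        (by rw [Finset.card_insert_of_notMem heE]; omega)
      refine ⟨((cofaces e).filter (· ∉ A)).biUnion F ∪ F', ?_, ?_⟩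
      · refine (Finset.card_union_le _ _).trans ?_
        rw [pow_succ', Nat.succ_mul]
        refine Nat.add_le_add ?_ hF'1
        refine (Finset.card_biUnion_le_card_mul _ _ ((2 * (d - k) + 1 + 1) ^ s) ?_).trans ?_
        · intro g hg
          exact (hF g (Finset.mem_filter.1 hg).2).1
        · exact Nat.mul_le_mul_right _ (card_options_le hkd hfk he A hf)
      · intro M hM hAM hEM
        rw [Finset.mem_union]
        by_cases hg : ∃ g ∈ M, e ∈ faceEdges g ∧ g ≠ f
        · left
          obtain ⟨g, hg, eg, hgf⟩ := hg
          have hgA : g ∉ A := fun hgA => hgf (hu g hgA eg)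
          rw [Finset.mem_biUnion]
          refine ⟨g, Finset.mem_filter.2 ⟨mem_cofaces eg, hgA⟩, (hF g hgA).2 M hM ?_ hEM⟩
          exact Finset.insert_subset hg hAM
        · right
          push Not at hg
          refine hF'2 M hM hAM ?_
          intro e' he' f1 h1 g1 h2 h3 h4
          rcases Finset.mem_insert.1 he' with rfl | he'
          · rw [hg f1 h1 h3, hg g1 h2 h4]
          · exact hEM e' he' f1 h1 g1 h2 h3 h4
    · refine ⟨{A}, by simpa using Nat.one_le_pow _ _ (by omega), ?_⟩
      intro M hM hAM hEM
      push Not at h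
      rw [Finset.mem_singleton]
      refine closure_eq hAM hne hM.2.2.1 ?_
      rintro f hf g hg ⟨hfg, e, ef, eg⟩
      have heE : e ∉ E := fun heE => hfg (hEM e heE f (hAM hf) g hg ef eg)
      obtain ⟨g', hg', eg', hne'⟩ := h f hf (hM.2.1 f (hAM hf)) e ef heE
      rw [third_eq (hM.2.2.2 e) (hAM hf) hg (hAM hg') ef eg eg' hfg hne']
      exact hg'

lemma translateFace_inj {d : ℕ} (t : Fin d → ℤ) : Function.Injective (translateFace t) := by
  rintro ⟨a, b⟩ ⟨a', b'⟩ h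
  simpa [translateFace] using h

lemma mem_faceEdges_translate {d : ℕ} (t : Fin d → ℤ) (f e : Face d) :
    e ∈ faceEdges (translateFace t f) ↔ translateFace (-t) e ∈ faceEdges f := by
  rw [mem_faceEdges', mem_faceEdges']
  simp only [translateFace]
  refine exists_congr fun i => and_congr_right fun _ => and_congr_right fun _ => or_congr ?_ ?_
  · rw [← sub_eq_add_neg, sub_eq_iff_eq_add]
  · rw [← sub_eq_add_neg, sub_eq_iff_eq_add, add_right_comm]

lemma mem_faceEdges_translate' {d : ℕ} (t : Fin d → ℤ) (f e : Face d) :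
    translateFace t e ∈ faceEdges (translateFace t f) ↔ e ∈ faceEdges f := by
  rw [mem_faceEdges_translate]
  simp [translateFace]

lemma filter_translate_card {d : ℕ} (t : Fin d → ℤ) (M : Finset (Face d)) (e : Face d) :
    ((M.image (translateFace t)).filter fun f => e ∈ faceEdges f).card =
      (M.filter fun f => translateFace (-t) e ∈ faceEdges f).card := by
  rw [Finset.filter_image, Finset.card_image_of_injective _ (translateFace_inj t)]
  simp only [mem_faceEdges_translate]

lemma isSAM_translate {d k n : ℕ} (t : Fin d → ℤ) {M : Finset (Face d)} (h : IsSAM d k n M) :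
    IsSAM d k n (M.image (translateFace t)) := by
  obtain ⟨h1, h2, h3, h4⟩ := h
  refine ⟨by rw [Finset.card_image_of_injective _ (translateFace_inj t), h1], ?_, ?_, ?_⟩
  · intro f hf
    obtain ⟨g, hg, rfl⟩ := Finset.mem_image.1 hf
    exact h2 g hg
  · intro f hf g hg
    obtain ⟨f, hf0, rfl⟩ := Finset.mem_image.1 hf
    obtain ⟨g, hg0, rfl⟩ := Finset.mem_image.1 hg
    refine Relation.ReflTransGen.lift (translateFace t) ?_ _ _ (h3 f hf0 g hg0)
    rintro a b ⟨ha, hb, hab, e, ea, eb⟩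
    refine ⟨Finset.mem_image_of_mem _ ha, Finset.mem_image_of_mem _ hb,
      fun h => hab (translateFace_inj t h), translateFace t e, ?_, ?_⟩
    · rwa [mem_faceEdges_translate']
    · rwa [mem_faceEdges_translate']
  · intro e
    rw [filter_translate_card]
    exact h4 _

lemma isClosedSAM_translate {d k n : ℕ} (t : Fin d → ℤ) {M : Finset (Face d)}
    (h : IsClosedSAM d k n M) : IsClosedSAM d k n (M.image (translateFace t)) := by
  refine ⟨isSAM_translate t h.1, ?_⟩
  intro f hf e he
  obtain ⟨f, hf0, rfl⟩ := Finset.mem_image.1 hf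
  rw [filter_translate_card]
  exact h.2 f hf0 _ ((mem_faceEdges_translate t f e).1 he)

lemma quot_bound {d k B : ℕ} (P : Finset (Face d) → Prop)
    (hP : ∀ t M, P M → P (M.image (translateFace t)))
    (hne : ∀ M, P M → ∃ f ∈ M, f.1.card = k)
    (hB : ∀ S : Finset (Fin d), ∃ F : Finset (Finset (Face d)), F.card ≤ B ∧
      ∀ M, P M → {(S, 0)} ⊆ M → M ∈ F) :
    Finite (Quot fun A B : {M : Finset (Face d) // P M} => TransEquiv A.val B.val) ∧ 
    Nat.card (Quot fun A B : {M : Finset (Face d) // P M} => TransEquiv A.val B.val)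
      ≤ d.choose k * B := by
  choose F hF1 hF2 using hB
  let G : Finset (Finset (Face d)) := (Finset.powersetCard k Finset.univ).biUnion F
  have hG : G.card ≤ d.choose k * B := by
    refine (Finset.card_biUnion_le_card_mul _ _ B (fun S _ => hF1 S)).trans ?_
    rw [Finset.card_powersetCard, Finset.card_univ, Fintype.card_fin]
  let X := {M : {M // M ∈ G} // P M.1}
  let φ : X → Quot (fun A B : {M : Finset (Face d) // P M} => TransEquiv A.val B.val) :=
    fun x => Quot.mk _ ⟨x.1.1, x.2⟩
  have hφ : Function.Surjective φ := by
    intro q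
    induction q using Quot.ind with
    | mk A =>
      obtain ⟨M, hM⟩ := A
      obtain ⟨f, hf, hfk⟩ := hne M hM
      have hPM := hP (-f.2) M hM
      refine ⟨⟨⟨M.image (translateFace (-f.2)), ?_⟩, hPM⟩, ?_⟩
      · refine Finset.mem_biUnion.2 ⟨f.1, by simp [Finset.mem_powersetCard, hfk], ?_⟩
        refine hF2 _ _ hPM ?_
        rw [Finset.singleton_subset_iff]
        refine Finset.mem_image.2 ⟨f, hf, ?_⟩
        simp [translateFace]
      · exact (Quot.sound ⟨-f.2, rfl⟩).symm
  refine ⟨Finite.of_surjective φ hφ, ?_⟩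
  refine (Nat.card_le_card_of_surjective φ hφ).trans ?_
  refine le_trans ?_ hG
  refine (Nat.card_le_card_of_injective (fun x : X => x.1) Subtype.val_injective).trans ?_
  simp

lemma closedSamCount_le {d k n : ℕ} (hkd : k < d) (hn : 0 < n) :
    closedSamCount d k n ≤ d.choose k * (2 * (d - k) + 1) ^ n := by
  refine (quot_bound (IsClosedSAM d k n) (fun t M h => isClosedSAM_translate t h) ?_ ?_).2
  · intro M hM
    obtain ⟨f, hf⟩ := Finset.card_pos.1 (by rw [hM.1.1]; exact hn)
    exact ⟨f, hf, hM.1.2.1 f hf⟩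
  · intro S
    obtain ⟨F, h1, h2⟩ := closed_bound (k := k) (n := n) hkd (n - 1) {(S, 0)}
      (Finset.singleton_nonempty _) (by simp; omega)
    exact ⟨F, h1.trans (Nat.pow_le_pow_right (by omega) (by omega)), h2⟩

lemma samCount_le {d k n : ℕ} (hkd : k < d) (hn : 0 < n) :
    Finite (Quot fun A B : {M : Finset (Face d) // IsSAM d k n M} => TransEquiv A.val B.val) ∧
    samCount d k n ≤ d.choose k * (2 * (d - k) + 1 + 1) ^ (n + n * (k * 2)) := by
  refine (quot_bound (IsSAM d k n) (fun t M h => isSAM_translate t h) ?_ ?_)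
  · intro M hM
    obtain ⟨f, hf⟩ := Finset.card_pos.1 (by rw [hM.1]; exact hn)
    exact ⟨f, hf, hM.2.1 f hf⟩
  · intro S
    obtain ⟨F, h1, h2⟩ := sam_bound (k := k) (n := n) hkd (n + n * (k * 2)) {(S, 0)} ∅
      (Finset.singleton_nonempty _) (by simp) (by omega)
    exact ⟨F, h1, fun M hM hS => h2 M hM hS (by simp)⟩

/-- The level of a face. -/
def lev {d : ℕ} (f : Face d) : ℤ := ∑ i, f.2 i

/-- The directed successors of a face. -/
def succs {d : ℕ} (f : Face d) : Finset (Face d) :=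
  (f.1.sigma fun i => (f.1.erase i)ᶜ).image
    fun p => (insert p.2 (f.1.erase p.1), f.2 + Pi.single p.1 1)

lemma card_succs {d k : ℕ} (hkd : k < d) (f : Face d) (hf : f.1.card = k) :
    (succs f).card = k * (d - k + 1) := by
  unfold succs
  rw [Finset.card_image_of_injOn, Finset.card_sigma]
  · rw [Finset.sum_congr rfl (g := fun _ => d - k + 1), Finset.sum_const, hf, smul_eq_mul]
    intro i hi
    have : 0 < f.1.card := Finset.card_pos.2 ⟨i, hi⟩
    rw [Finset.card_compl, Finset.card_erase_of_mem hi, Fintype.card_fin]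
    omega
  · rintro ⟨i, j⟩ h ⟨i', j'⟩ h' heq
    simp only [Finset.coe_sigma, Set.mem_sigma_iff, Finset.mem_coe, Finset.mem_compl] at h h'
    simp only [Prod.mk.injEq, add_right_inj] at heq
    obtain ⟨h1, h2⟩ := heq
    have hi : i = i' := by
      by_contra hne
      have := congrFun h2 i
      rw [Pi.single_eq_same, Pi.single_eq_of_ne hne] at this
      exact one_ne_zero this
    subst hi
    have hj : j ∈ insert j' (f.1.erase i) := by rw [← h1]; exact Finset.mem_insert_self _ _
    rcases Finset.mem_insert.1 hj with rfl | hj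
    · rfl
    · exact absurd hj h.2

lemma succs_spec {d k : ℕ} {f g : Face d} (hf : f.1.card = k) (hg : g ∈ succs f) :
    lev g = lev f + 1 ∧ g.1.card = k ∧ FaceAdj f g := by
  obtain ⟨⟨i, j⟩, h, rfl⟩ := Finset.mem_image.1 hg
  simp only [Finset.mem_sigma, Finset.mem_compl] at h
  have hl : lev ((insert j (f.1.erase i), f.2 + Pi.single i 1) : Face d) = lev f + 1 := by
    simp [lev, Finset.sum_add_distrib]
  refine ⟨hl, ?_, ?_, (f.1.erase i, f.2 + Pi.single i 1), ?_, ?_⟩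
  · have : 0 < f.1.card := Finset.card_pos.2 ⟨i, h.1⟩
    rw [Finset.card_insert_of_notMem h.2, Finset.card_erase_of_mem h.1]
    omega
  · intro heq
    rw [← heq] at hl
    omega
  · exact (mem_faceEdges' _ _).2 ⟨i, h.1, rfl, Or.inr rfl⟩
  · exact (mem_faceEdges' _ _).2 ⟨j, Finset.mem_insert_self _ _,
      (Finset.erase_insert h.2).symm, Or.inl rfl⟩

lemma lev_edge {d : ℕ} {f e : Face d} (h : e ∈ faceEdges f) : lev f = lev e ∨ lev f = lev e - 1 := by
  obtain ⟨i, hi, h1, h2 | h2⟩ := (mem_faceEdges' f e).1 h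
  · left; simp [lev, h2]
  · right; simp [lev, h2, Finset.sum_add_distrib]

structure Good (d k : ℕ) (S : Finset (Fin d)) (n : ℕ) (M : Finset (Face d)) : Prop where
  card : M.card = n + 1
  face : ∀ f ∈ M, f.1.card = k
  inj : ∀ f ∈ M, ∀ g ∈ M, lev f = lev g → f = g
  nonneg : ∀ f ∈ M, 0 ≤ lev f
  le : ∀ f ∈ M, lev f ≤ n
  root : (S, 0) ∈ M
  conn : ConnectedFaces M
  top : ∃ f ∈ M, lev f = n

lemma Good.sam {d k n : ℕ} {S : Finset (Fin d)} {M : Finset (Face d)} (h : Good d k S n M) :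
    IsSAM d k (n + 1) M := by
  refine ⟨h.card, h.face, h.conn, ?_⟩
  intro e
  have : (M.filter fun f => e ∈ faceEdges f).card ≤ ({lev e, lev e - 1} : Finset ℤ).card := by
    refine Finset.card_le_card_of_injOn lev ?_ ?_
    · intro f hf
      have hf := Finset.mem_filter.1 (Finset.mem_coe.1 hf)
      simpa using lev_edge hf.2
    · intro f hf g hg hfg
      have hf := Finset.mem_filter.1 (Finset.mem_coe.1 hf)
      have hg := Finset.mem_filter.1 (Finset.mem_coe.1 hg)
      exact h.inj f hf.1 g hg.1 hfg
  exact this.trans Finset.card_le_two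

lemma connected_insert {d : ℕ} {M : Finset (Face d)} {f g : Face d} (hM : ConnectedFaces M)
    (hf : f ∈ M) (hfg : FaceAdj f g) : ConnectedFaces (insert g M) := by
  have hsymm : Std.Symm (fun a b => a ∈ insert g M ∧ b ∈ insert g M ∧ FaceAdj a b) := by
    constructor
    rintro a b ⟨ha, hb, hab, e, e1, e2⟩
    exact ⟨hb, ha, hab.symm, e, e2, e1⟩
  have key : ∀ a ∈ insert g M, Relation.ReflTransGen
      (fun a b => a ∈ insert g M ∧ b ∈ insert g M ∧ FaceAdj a b) f a := by
    intro a ha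
    rcases Finset.mem_insert.1 ha with rfl | ha
    · exact Relation.ReflTransGen.single
        ⟨Finset.mem_insert_of_mem hf, Finset.mem_insert_self _ _, hfg⟩
    · refine Relation.ReflTransGen.mono ?_ _ _ (hM f hf a ha)
      rintro x y ⟨hx, hy, hxy⟩
      exact ⟨Finset.mem_insert_of_mem hx, Finset.mem_insert_of_mem hy, hxy⟩
  intro a ha b hb
  exact (symm (key a ha)).trans (key b hb)

lemma Good.step {d k n : ℕ} {S : Finset (Fin d)} {M : Finset (Face d)} (h : Good d k S n M)
    {f g : Face d} (hf : f ∈ M) (hfn : lev f = n) (hg : g ∈ succs f) :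
    Good d k S (n + 1) (insert g M) := by
  obtain ⟨h1, h2, h3⟩ := succs_spec (h.face f hf) hg
  have hgM : g ∉ M := fun hgM => by have := h.le g hgM; omega
  refine ⟨by rw [Finset.card_insert_of_notMem hgM, h.card], ?_, ?_, ?_, ?_,
    Finset.mem_insert_of_mem h.root, connected_insert h.conn hf h3,
    ⟨g, Finset.mem_insert_self _ _, by push_cast; omega⟩⟩
  · intro a ha
    rcases Finset.mem_insert.1 ha with rfl | ha
    · exact h2
    · exact h.face a ha
  · intro a ha b hb hab
    rcases Finset.mem_insert.1 ha with rfl | ha1 <;> rcases Finset.mem_insert.1 hb with rfl | hb1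
    · rfl
    · have := h.le b hb1; omega
    · have := h.le a ha1; omega
    · exact h.inj a ha1 b hb1 hab
  · intro a ha
    rcases Finset.mem_insert.1 ha with rfl | ha
    · omega
    · exact h.nonneg a ha
  · intro a ha
    push_cast
    rcases Finset.mem_insert.1 ha with rfl | ha
    · omega
    · have := h.le a ha; omega

lemma good_family {d k : ℕ} (hkd : k < d) (S : Finset (Fin d)) (hS : S.card = k) : ∀ n : ℕ,
    ∃ G : Finset (Finset (Face d)), G.card = (k * (d - k + 1)) ^ n ∧ ∀ M ∈ G, Good d k S n M := by
  intro n
  induction n with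
  | zero =>
    refine ⟨{{(S, 0)}}, by simp, ?_⟩
    intro M hM
    rw [Finset.mem_singleton] at hM
    subst hM
    refine ⟨by simp, by simp [hS], by simp, by simp [lev], by simp [lev], by simp, ?_,
      by simp [lev]⟩
    intro f hf g hg
    rw [Finset.mem_singleton] at hf hg
    subst hf; subst hg
    exact Relation.ReflTransGen.refl
  | succ n ih =>
    obtain ⟨G, hG, hgood⟩ := ih
    have : ∀ M, ∃ f, Good d k S n M → f ∈ M ∧ lev f = n := by
      intro M
      by_cases h : Good d k S n M
      · obtain ⟨f, hf⟩ := h.top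
        exact ⟨f, fun _ => hf⟩
      · exact ⟨(S, 0), fun h' => absurd h' h⟩
    choose top htop using this
    refine ⟨(G.sigma fun M => succs (top M)).image fun p => insert p.2 p.1, ?_, ?_⟩
    · rw [Finset.card_image_of_injOn, Finset.card_sigma]
      · rw [Finset.sum_congr rfl (g := fun _ => k * (d - k + 1)), Finset.sum_const, hG,
          smul_eq_mul, pow_succ]
        intro M hM
        have h := hgood M hM
        exact card_succs hkd _ (h.face _ (htop M h).1)
      · have aux : ∀ M ∈ G, ∀ g ∈ succs (top M), ∀ M' ∈ G, ∀ g' ∈ succs (top M'),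
            insert g M = insert g' M' → M ⊆ M' := by
          intro M hM g hg M' hM' g' hg' heq x hx
          have h' := hgood M' hM'
          have h := hgood M hM
          have h1 := (succs_spec (h'.face _ (htop M' h').1) hg').1
          have h2 := (htop M' h').2
          have hx' : x ∈ insert g' M' := by rw [← heq]; exact Finset.mem_insert_of_mem hx
          rcases Finset.mem_insert.1 hx' with rfl | hx'
          · have := h.le x hx; omega
          · exact hx'
        rintro ⟨M, g⟩ hp ⟨M', g'⟩ hp' heq
        simp only [Finset.mem_coe, Finset.mem_sigma] at hp hp' heq
        have hMM : M = M' := Finset.Subset.antisymm (aux M hp.1 g hp.2 M' hp'.1 g' hp'.2 heq)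
          (aux M' hp'.1 g' hp'.2 M hp.1 g hp.2 heq.symm)
        subst hMM
        have hx : g ∈ insert g' M := by rw [← heq]; exact Finset.mem_insert_self _ _
        rcases Finset.mem_insert.1 hx with rfl | hx
        · rfl
        · have h := hgood M hp.1
          have h1 := (succs_spec (h.face _ (htop M h).1) hp.2).1
          have h2 := (htop M h).2
          have := h.le g hx
          omega
    · intro M' hM'
      obtain ⟨⟨M, g⟩, hp, rfl⟩ := Finset.mem_image.1 hM'
      simp only [Finset.mem_sigma] at hp
      have h := hgood M hp.1
      exact h.step (htop M h).1 (htop M h).2 hp.2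

lemma good_trans {d k n : ℕ} {S : Finset (Fin d)} {A B : Finset (Face d)} (hA : Good d k S n A)
    (hB : Good d k S n B) (h : TransEquiv A B) : A = B := by
  obtain ⟨t, rfl⟩ := h
  have hl : ∀ f : Face d, lev (translateFace t f) = lev f + ∑ i, t i := by
    intro f
    simp [lev, translateFace, Finset.sum_add_distrib]
  have h0 : lev ((S, 0) : Face d) = 0 := by simp [lev]
  have h1 := hB.nonneg _ (Finset.mem_image_of_mem _ hA.root)
  rw [hl, h0] at h1
  obtain ⟨a, ha, har⟩ := Finset.mem_image.1 hB.root
  have h2 := hl a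
  rw [har, h0] at h2
  have h3 := hA.nonneg a ha
  have h4 := hA.inj a ha _ hA.root (by omega)
  subst h4
  have ht : t = 0 := by simpa [translateFace] using har
  subst ht
  have : (translateFace (0 : Fin d → ℤ)) = id := by
    funext f; simp [translateFace]
  rw [this, Finset.image_id]

lemma transEquiv_equivalence (d k n : ℕ) :
    Equivalence (fun A B : {M : Finset (Face d) // IsSAM d k n M} => TransEquiv A.val B.val) := by
  have hc : ∀ s t : Fin d → ℤ, ∀ M : Finset (Face d),
      (M.image (translateFace s)).image (translateFace t) = M.image (translateFace (s + t)) := by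
    intro s t M
    rw [Finset.image_image]
    congr 1
    funext f
    simp [translateFace, add_assoc]
  have h0 : ∀ M : Finset (Face d), M.image (translateFace 0) = M := by
    intro M
    have : (translateFace (0 : Fin d → ℤ)) = id := by
      funext f; simp [translateFace]
    rw [this, Finset.image_id]
  refine ⟨fun A => ⟨0, h0 _⟩, ?_, ?_⟩
  · rintro A B ⟨t, ht⟩
    exact ⟨-t, by rw [← ht, hc, add_neg_cancel, h0]⟩
  · rintro A B C ⟨t, ht⟩ ⟨s, hs⟩
    exact ⟨t + s, by rw [← hs, ← ht, hc]⟩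

lemma le_samCount {d k n : ℕ} (hkd : k < d) :
    (k * (d - k + 1)) ^ n ≤ samCount d k (n + 1) := by
  obtain ⟨S, -, hS⟩ := Finset.exists_subset_card_eq
    (s := (Finset.univ : Finset (Fin d))) (n := k) (by simpa using hkd.le)
  obtain ⟨G, hG, hgood⟩ := good_family hkd S hS n
  have := (samCount_le (k := k) (n := n + 1) hkd (Nat.succ_pos n)).1
  rw [← hG, ← Nat.card_eq_finsetCard G]
  unfold samCount
  refine Nat.card_le_card_of_injective
    (fun M : G => Quot.mk _ ⟨M.1, (hgood M.1 M.2).sam⟩) ?_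
  intro A B hAB
  have := (transEquiv_equivalence d k (n + 1)).eqvGen_iff.1 (Quot.eqvGen_exact hAB)
  exact Subtype.ext (good_trans (hgood A.1 A.2) (hgood B.1 B.2) this)

lemma tendsto_aux (C r : ℝ) (hC : 0 < C) (hr : 0 ≤ r) :
    Tendsto (fun n : ℕ => (C * r ^ n) ^ (1 / (n : ℝ))) atTop (nhds r) := by
  have h1 : Tendsto (fun n : ℕ => C ^ (1 / (n : ℝ)) * r) atTop (nhds (C ^ (0 : ℝ) * r)) := by
    refine Tendsto.mul_const r ?_
    exact (Real.continuousAt_const_rpow hC.ne').tendsto.comp tendsto_one_div_atTop_nhds_zero_nat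
  rw [Real.rpow_zero, one_mul] at h1
  refine h1.congr' ?_
  filter_upwards [eventually_gt_atTop 0] with n hn
  rw [Real.mul_rpow hC.le (pow_nonneg hr n), one_div, Real.pow_rpow_inv_natCast hr hn.ne']

theorem closed_sam_growth_strictly_smaller (d k : ℕ) (hk : 1 < k) (hkd : k < d) :
    limsup (fun n : ℕ => (closedSamCount d k n : ℝ) ^ (1 / (n : ℝ))) atTop ≤
        ((2 * (d - k) + 1 : ℕ) : ℝ) ∧
      ((2 * (d - k) + 1 : ℕ) : ℝ) < ((k * (d - k + 1) : ℕ) : ℝ) ∧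
      ((k * (d - k + 1) : ℕ) : ℝ) ≤
        liminf (fun n : ℕ => (samCount d k n : ℝ) ^ (1 / (n : ℝ))) atTop := by
  have hnn : ∀ (a n : ℕ), (0 : ℝ) ≤ (a : ℝ) ^ (1 / (n : ℝ)) := fun a n =>
    Real.rpow_nonneg (Nat.cast_nonneg a) _
  have hch : (0 : ℝ) < (d.choose k : ℝ) := by exact_mod_cast Nat.choose_pos hkd.le
  refine ⟨?_, ?_, ?_⟩
  · have ht := tendsto_aux (d.choose k : ℝ) ((2 * (d - k) + 1 : ℕ) : ℝ) hch (Nat.cast_nonneg _)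
    rw [← ht.limsup_eq]
    refine limsup_le_limsup ?_ ?_ ht.isBoundedUnder_le
    · filter_upwards [eventually_gt_atTop 0] with n hn
      refine Real.rpow_le_rpow (Nat.cast_nonneg _) ?_ (by positivity)
      exact_mod_cast closedSamCount_le hkd hn
    · exact (isBoundedUnder_of ⟨0, fun n => hnn _ n⟩ : IsBoundedUnder (· ≥ ·) atTop _).isCoboundedUnder_le
  · have : 2 * (d - k) + 1 < k * (d - k + 1) := by nlinarith [Nat.zero_le (d - k)]
    exact_mod_cast this
  · have hK : 0 < k * (d - k + 1) := by positivity
    have hK' : (0 : ℝ) < ((k * (d - k + 1) : ℕ) : ℝ) := by exact_mod_cast hK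
    have ht := tendsto_aux (((k * (d - k + 1) : ℕ) : ℝ)⁻¹) ((k * (d - k + 1) : ℕ) : ℝ)
      (inv_pos.2 hK') hK'.le
    have hu := tendsto_aux (d.choose k : ℝ)
      (((2 * (d - k) + 1 + 1) ^ (1 + k * 2) : ℕ) : ℝ) hch (Nat.cast_nonneg _)
    rw [← ht.liminf_eq]
    refine liminf_le_liminf ?_ ht.isBoundedUnder_ge ?_
    · filter_upwards [eventually_gt_atTop 0] with n hn
      refine Real.rpow_le_rpow (by positivity) ?_ (by positivity)
      obtain ⟨m, rfl⟩ := Nat.exists_eq_succ_of_ne_zero hn.ne'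
      rw [pow_succ', inv_mul_cancel_left₀ hK'.ne']
      exact_mod_cast le_samCount (n := m) hkd
    · refine (hu.isBoundedUnder_le.mono_le ?_).isCoboundedUnder_ge
      filter_upwards [eventually_gt_atTop 0] with n hn
      refine Real.rpow_le_rpow (Nat.cast_nonneg _) ?_ (by positivity)
      have h := (samCount_le (k := k) hkd hn).2
      have e : n + n * (k * 2) = (1 + k * 2) * n := by ring
      rw [e, pow_mul] at h
      exact_mod_cast h
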